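/- Correctness of the improved MIP formulation: let S* ⊆ S contain every path s with p(s) > 0 and let U : S → ℝ be a utility function. Call a pair (z, x) feasible if z assigns to each j ∈ D, s_j ∈ S_j, s_{I(j)} ∈ S_{I(j)} a value z(s_j | s_{I(j)}) ∈ {0,1} with ∑_{s_j∈S_j} z(s_j | s_{I(j)}) = 1 for all j ∈ D and s_{I(j)}, and x : S* → [0,1] satisfies ∑_{s ∈ S* ∩ S_{s_j|s_{I(j)}}} x(s) ≤ Γ(s_j|s_{I(j)}) · z(s_j | s_{I(j)}) for all j ∈ D, s_j, s_{I(j)} (with Γ(s_j|s_{I(j)}) = min{ |S* ∩ S_{s_j|s_{I(j)}}|, ∏_{k ∈ C \ ({j} ∪ I(j))} |S_k| }) and ∑_{s∈S*} p(s)x(s) = 1. Then the maximum of ∑_{s∈S*} p(s)x(s)U(s) over all feasible pairs (z, x) equals the maximum over all strategies Z of the expected utility ∑_{s∈S(Z)} p(s)U(s). -/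

import Mathlib

/-!
STATEMENT 12: Correctness of the improved MIP formulation: let S* ⊆ S contain every
path s with p(s) > 0 and let U : S → ℝ be a utility function. Call a pair (z, x)
feasible if z assigns to each j ∈ D, s_j ∈ S_j, s_{I(j)} ∈ S_{I(j)} a value
z(s_j | s_{I(j)}) ∈ {0,1} with ∑_{s_j∈S_j} z(s_j | s_{I(j)}) = 1 for all j ∈ D and
s_{I(j)}, and x : S* → [0,1] satisfies
∑_{s ∈ S* ∩ S_{s_j|s_{I(j)}}} x(s) ≤ Γ(s_j|s_{I(j)}) · z(s_j | s_{I(j)}) for all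
j ∈ D, s_j, s_{I(j)} (with
Γ(s_j|s_{I(j)}) = min{ |S* ∩ S_{s_j|s_{I(j)}}|, ∏_{k ∈ C \ ({j} ∪ I(j))} |S_k| })
and ∑_{s∈S*} p(s)x(s) = 1. Then the maximum of ∑_{s∈S*} p(s)x(s)U(s) over all
feasible pairs (z, x) equals the maximum over all strategies Z of the expected
utility ∑_{s∈S(Z)} p(s)U(s).
-/

open Finset

attribute [local instance] Classical.propDecidable

/-- Restriction of a path `s` to the information set `I j` of node `j`. -/
def restrict {n : ℕ} {S : Fin n → Type} (I : Fin n → Finset (Fin n))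
    (s : ∀ j, S j) (j : Fin n) : ∀ i : (I j), S i.1 :=
  fun i => s i.1

/-- The path probability `p(s) = ∏_{j ∈ C} P(s_j | s_{I(j)})`. -/
def pathProb {n : ℕ} {S : Fin n → Type} (C : Finset (Fin n))
    (I : Fin n → Finset (Fin n))
    (P : ∀ j : Fin n, (∀ i : (I j), S i.1) → S j → ℝ)
    (s : ∀ j, S j) : ℝ :=
  ∏ j ∈ C, P j (restrict I s j) (s j)

theorem sum_update_aux {n : ℕ} {S : Fin n → Type} [∀ j, Fintype (S j)] (m : Fin n)
    (f : (∀ j, S j) → ℝ) :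
    ∑ s : (∀ j, S j), ∑ a : S m, f (Function.update s m a)
      = (Fintype.card (S m) : ℝ) * ∑ s, f s := by
  have h1 : ∑ s : (∀ j, S j), ∑ a : S m, f (Function.update s m a)
      = ∑ q : (∀ j, S j) × S m, f (Function.update q.1 m q.2) := by
    rw [Fintype.sum_prod_type]
  have h2 : ∑ q : (∀ j, S j) × S m, f (Function.update q.1 m q.2)
      = ∑ q : (∀ j, S j) × S m, f q.1 := by
    refine Finset.sum_bij' (fun q _ => (Function.update q.1 m q.2, q.1 m))
      (fun q _ => (Function.update q.1 m q.2, q.1 m)) ?_ ?_ ?_ ?_ ?_ <;> simp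
  rw [h1, h2, Fintype.sum_prod_type]
  simp [Finset.mul_sum]

theorem sum_prod_aux {n : ℕ} {S : Fin n → Type} [∀ j, Fintype (S j)] [∀ j, Nonempty (S j)]
    (q : ∀ _ : Fin n, (∀ k, S k) → ℝ)
    (hdep : ∀ j k, j < k → ∀ s a, q j (Function.update s k a) = q j s)
    (hsum : ∀ j s, ∑ a : S j, q j (Function.update s j a) = 1) :
    ∑ s : (∀ j, S j), ∏ j, q j s = 1 := by
  have key : ∀ T : Finset (Fin n), (∏ j ∈ T, (Fintype.card (S j) : ℝ)) *
      ∑ s : (∀ j, S j), ∏ j ∈ T, q j s = ∏ j, (Fintype.card (S j) : ℝ) := by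
    intro T
    induction T using Finset.induction_on_max with
    | empty => simp [Fintype.card_pi]
    | insert m T hT ih =>
      have hm : m ∉ T := fun h => lt_irrefl _ (hT m h)
      rw [Finset.prod_insert hm, mul_comm (Fintype.card (S m) : ℝ), mul_assoc,
        ← sum_update_aux m, ← ih]
      congr 1
      refine Finset.sum_congr rfl fun s _ => ?_
      have : ∀ a : S m, ∏ j ∈ insert m T, q j (Function.update s m a)
          = q m (Function.update s m a) * ∏ j ∈ T, q j s := by
        intro a
        rw [Finset.prod_insert hm]
        congr 1
        exact Finset.prod_congr rfl fun j hj => hdep j m (hT j hj) s a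
      simp_rw [this]
      rw [← Finset.sum_mul, hsum, one_mul]
  have h := key Finset.univ
  have hne : (∏ j, (Fintype.card (S j) : ℝ)) ≠ 0 := by
    refine Finset.prod_ne_zero_iff.mpr fun j _ => ?_
    exact_mod_cast Fintype.card_ne_zero
  exact mul_left_cancel₀ hne (by rw [h, mul_one])

theorem strategy_sum_one {n : ℕ}
    (S : Fin n → Type) [∀ j, Fintype (S j)] [∀ j, Nonempty (S j)]
    (C D : Finset (Fin n)) (hCD : Disjoint C D) (hCDunion : C ∪ D = Finset.univ)
    (I : Fin n → Finset (Fin n)) (hI : ∀ j, ∀ i ∈ I j, i < j)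
    (P : ∀ j : Fin n, (∀ i : (I j), S i.1) → S j → ℝ)
    (hPsum : ∀ j ∈ C, ∀ sI : ∀ i : (I j), S i.1, ∑ sj : S j, P j sI sj = 1)
    (Z : ∀ j : Fin n, (∀ i : (I j), S i.1) → S j) :
    ∑ s ∈ Finset.univ.filter
                (fun s : ∀ j, S j => ∀ j ∈ D, Z j (restrict I s j) = s j),
              pathProb C I P s = 1 := by
  have hr : ∀ j k, j ≤ k → ∀ (s : ∀ j, S j) (a : S k),
      restrict I (Function.update s k a) j = restrict I s j := by
    intro j k hjk s a
    funext i
    have : i.1 ≠ k := ne_of_lt (lt_of_lt_of_le (hI j i.1 i.2) hjk)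
    simp [_root_.restrict, Function.update_of_ne this]
  rw [← sum_prod_aux (S := S) (fun j s => if j ∈ C then P j (restrict I s j) (s j) else
    if Z j (restrict I s j) = s j then 1 else 0)]
  · rw [Finset.sum_filter]
    refine Finset.sum_congr rfl fun s _ => ?_
    have hun : (Finset.univ : Finset (Fin n)) = C ∪ D := hCDunion.symm
    rw [hun, Finset.prod_union hCD]
    have h1 : ∏ j ∈ C, (if j ∈ C then P j (restrict I s j) (s j) else
        if Z j (restrict I s j) = s j then 1 else 0) = pathProb C I P s :=
      Finset.prod_congr rfl fun j hj => by simp [hj]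
    have h2 : ∏ j ∈ D, (if j ∈ C then P j (restrict I s j) (s j) else
        if Z j (restrict I s j) = s j then 1 else 0)
        = if (∀ j ∈ D, Z j (restrict I s j) = s j) then (1 : ℝ) else 0 := by
      have : ∀ j ∈ D, (if j ∈ C then P j (restrict I s j) (s j) else
        if Z j (restrict I s j) = s j then 1 else 0)
        = if Z j (restrict I s j) = s j then (1 : ℝ) else 0 := fun j hj => by
          simp [Finset.disjoint_right.mp hCD hj]
      rw [Finset.prod_congr rfl this]
      split_ifs with h
      · exact Finset.prod_eq_one fun j hj => by simp [h j hj]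
      · push Not at h
        obtain ⟨j, hj, hne⟩ := h
        exact Finset.prod_eq_zero hj (by simp [hne])
    rw [h1, h2]
    split_ifs <;> simp
  · intro j k hjk s a
    simp only [hr j k hjk.le, Function.update_of_ne hjk.ne]
  · intro j s
    simp only [hr j j le_rfl, Function.update_self]
    by_cases hj : j ∈ C
    · simp [hj, hPsum j hj]
    · simp [hj]

theorem card_bound {n : ℕ}
    (S : Fin n → Type) [∀ j, Fintype (S j)]
    (C D : Finset (Fin n)) (hCDunion : C ∪ D = Finset.univ)
    (I : Fin n → Finset (Fin n)) (hI : ∀ j, ∀ i ∈ I j, i < j)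
    (Z : ∀ j : Fin n, (∀ i : (I j), S i.1) → S j) (j : Fin n) (sj : S j)
    (sI : ∀ i : (I j), S i.1) (A : Finset (∀ j, S j))
    (hA : ∀ s ∈ A, (s j = sj ∧ restrict I s j = sI) ∧ ∀ j ∈ D, Z j (restrict I s j) = s j) :
    A.card ≤ ∏ k ∈ C \ insert j (I j), Fintype.card (S k) := by
  have hc : ∏ k ∈ C \ insert j (I j), Fintype.card (S k)
      = Fintype.card (∀ k : {k // k ∈ C \ insert j (I j)}, S k.1) := by
    rw [Fintype.card_pi, Finset.prod_coe_sort (C \ insert j (I j)) (fun k => Fintype.card (S k))]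
  rw [hc, ← Finset.card_univ]
  refine Finset.card_le_card_of_injOn (fun s k => s k.1) (fun _ _ => Finset.mem_univ _) ?_
  intro s hs t ht hst
  obtain ⟨⟨hs1, hs2⟩, hs3⟩ := hA s hs
  obtain ⟨⟨ht1, ht2⟩, ht3⟩ := hA t ht
  funext k
  induction k using WellFoundedLT.induction with
  | ind k ih =>
    by_cases hk : k ∈ D
    · rw [← hs3 k hk, ← ht3 k hk]
      congr 1
      funext i
      exact ih i.1 (hI k i.1 i.2)
    · have hkC : k ∈ C := by
        have := Finset.mem_univ k
        rw [← hCDunion, Finset.mem_union] at this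
        tauto
      by_cases hkj : k = j
      · subst hkj; rw [hs1, ht1]
      · by_cases hkI : k ∈ I j
        · exact congrFun (hs2.trans ht2.symm) ⟨k, hkI⟩
        · exact congrFun hst ⟨k, by simp [hkC, hkj, hkI]⟩

theorem improved_MIP_correct {n : ℕ}
    (S : Fin n → Type) [∀ j, Fintype (S j)] [∀ j, Nonempty (S j)]
    (C D : Finset (Fin n)) (hCD : Disjoint C D) (hCDunion : C ∪ D = Finset.univ)
    (I : Fin n → Finset (Fin n)) (hI : ∀ j, ∀ i ∈ I j, i < j)
    (P : ∀ j : Fin n, (∀ i : (I j), S i.1) → S j → ℝ)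
    (hPnonneg : ∀ j ∈ C, ∀ (sI : ∀ i : (I j), S i.1) (sj : S j), 0 ≤ P j sI sj)
    (hPsum : ∀ j ∈ C, ∀ sI : ∀ i : (I j), S i.1, ∑ sj : S j, P j sI sj = 1)
    (Sstar : Finset (∀ j, S j))
    (hSstar : ∀ s : ∀ j, S j, 0 < pathProb C I P s → s ∈ Sstar)
    (U : (∀ j, S j) → ℝ) :
    ∃ M : ℝ,
      IsGreatest
        {v : ℝ | ∃ (z : ∀ j : Fin n, (∀ i : (I j), S i.1) → S j → ℝ)
            (x : (∀ j, S j) → ℝ),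
          (∀ j ∈ D, ∀ (sI : ∀ i : (I j), S i.1) (sj : S j),
            z j sI sj = 0 ∨ z j sI sj = 1) ∧
          (∀ j ∈ D, ∀ sI : ∀ i : (I j), S i.1, ∑ sj : S j, z j sI sj = 1) ∧
          (∀ s ∈ Sstar, 0 ≤ x s ∧ x s ≤ 1) ∧
          (∀ j ∈ D, ∀ (sj : S j) (sI : ∀ i : (I j), S i.1),
            (∑ s ∈ Sstar.filter
                (fun s : ∀ k, S k => s j = sj ∧ restrict I s j = sI), x s)
              ≤ ((min
                    (Sstar.filter
                      (fun s : ∀ k, S k => s j = sj ∧ restrict I s j = sI)).card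
                    (∏ k ∈ C \ insert j (I j), Fintype.card (S k)) : ℕ) : ℝ)
                * z j sI sj) ∧
          (∑ s ∈ Sstar, pathProb C I P s * x s = 1) ∧
          v = ∑ s ∈ Sstar, pathProb C I P s * x s * U s} M
      ∧ IsGreatest
          {v : ℝ | ∃ Z : ∀ j : Fin n, (∀ i : (I j), S i.1) → S j,
            v = ∑ s ∈ Finset.univ.filter
                (fun s : ∀ j, S j => ∀ j ∈ D, Z j (restrict I s j) = s j),
              pathProb C I P s * U s} M := by
  have hp0 : ∀ s, 0 ≤ pathProb C I P s := fun s =>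
    Finset.prod_nonneg fun j hj => hPnonneg j hj _ _
  have hpz : ∀ s, s ∉ Sstar → pathProb C I P s = 0 := fun s hs =>
    le_antisymm (not_lt.mp fun h => hs (hSstar s h)) (hp0 s)
  have hone := strategy_sum_one S C D hCD hCDunion I hI P hPsum
  -- conversion of sums
  have hconv : ∀ (Z : ∀ j : Fin n, (∀ i : (I j), S i.1) → S j) (V : (∀ j, S j) → ℝ),
      ∑ s ∈ Finset.univ.filter
          (fun s : ∀ j, S j => ∀ j ∈ D, Z j (restrict I s j) = s j), pathProb C I P s * V s
      = ∑ s ∈ Sstar, pathProb C I P s *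
          (if (∀ j ∈ D, Z j (restrict I s j) = s j) then 1 else 0) * V s := by
    intro Z V
    rw [Finset.sum_filter]
    symm
    refine (Finset.sum_subset (Finset.subset_univ Sstar) ?_).trans ?_
    · intro s _ hs
      simp [hpz s hs]
    · refine Finset.sum_congr rfl fun s _ => ?_
      split_ifs <;> simp
  have hone' : ∀ (Z : ∀ j : Fin n, (∀ i : (I j), S i.1) → S j),
      ∑ s ∈ Sstar, pathProb C I P s *
          (if (∀ j ∈ D, Z j (restrict I s j) = s j) then (1 : ℝ) else 0) = 1 := by
    intro Z
    have h := hconv Z (fun _ => 1)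
    simp only [mul_one] at h
    rw [← h, hone Z]
  have : ∀ A B : Set ℝ, A = B → (∃ M, IsGreatest B M) → ∃ M, IsGreatest A M ∧ IsGreatest B M := by
    rintro A B rfl ⟨M, h⟩
    exact ⟨M, h, h⟩
  apply this
  · ext v
    constructor
    · rintro ⟨z, x, hz01, hzsum, hx, hle, hpx, rfl⟩
      have hex : ∀ j, ∀ sI : (∀ i : (I j), S i.1), ∃ a : S j, j ∈ D → z j sI a ≠ 0 := by
        intro j sI
        by_cases hj : j ∈ D
        · by_contra hcon
          push Not at hcon
          have h1 := hzsum j hj sI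
          rw [Finset.sum_eq_zero fun a _ => (hcon a).2] at h1
          exact zero_ne_one h1
        · exact ⟨Classical.arbitrary _, fun h => absurd h hj⟩
      choose Z hZ using hex
      have hzne : ∀ j ∈ D, ∀ sI a, Z j sI ≠ a → z j sI a = 0 := by
        intro j hj sI a hne
        by_contra h0
        have ha : z j sI a = 1 := (hz01 j hj sI a).resolve_left h0
        have hb : z j sI (Z j sI) = 1 := (hz01 j hj sI _).resolve_left (hZ j sI hj)
        have hs : ∑ c ∈ {Z j sI, a}, z j sI c ≤ ∑ c, z j sI c :=
          Finset.sum_le_sum_of_subset_of_nonneg (Finset.subset_univ _) fun c _ _ => by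
            rcases hz01 j hj sI c with h | h <;> simp [h]
        rw [Finset.sum_pair hne, ha, hb, hzsum j hj sI] at hs
        norm_num at hs
      have hx0 : ∀ s ∈ Sstar, ¬ (∀ j ∈ D, Z j (restrict I s j) = s j) → x s = 0 := by
        intro s hs hn
        push Not at hn
        obtain ⟨j, hj, hne⟩ := hn
        have h1 := hle j hj (s j) (restrict I s j)
        rw [hzne j hj _ _ hne, mul_zero] at h1
        refine le_antisymm (le_trans ?_ h1) (hx s hs).1
        exact Finset.single_le_sum (f := x)
          (fun t ht => (hx t (Finset.mem_filter.mp ht).1).1)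
          (Finset.mem_filter.mpr ⟨hs, rfl, rfl⟩)
      have hle' : ∀ s ∈ Sstar, pathProb C I P s * x s ≤ pathProb C I P s *
          (if (∀ j ∈ D, Z j (restrict I s j) = s j) then (1 : ℝ) else 0) := by
        intro s hs
        refine mul_le_mul_of_nonneg_left ?_ (hp0 s)
        split_ifs with h
        · exact (hx s hs).2
        · exact (hx0 s hs h).le
      have heq := (Finset.sum_eq_sum_iff_of_le hle').mp (hpx.trans (hone' Z).symm)
      refine ⟨Z, ?_⟩
      rw [hconv Z U]
      exact Finset.sum_congr rfl fun s hs => by rw [heq s hs]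
    · rintro ⟨Z, rfl⟩
      refine ⟨fun j sI a => if Z j sI = a then 1 else 0,
        fun s => if (∀ j ∈ D, Z j (restrict I s j) = s j) then 1 else 0,
        ?_, ?_, ?_, ?_, hone' Z, hconv Z U⟩
      · intro j _ sI a
        by_cases h : Z j sI = a <;> simp [h]
      · intro j _ sI
        simp
      · intro s _
        dsimp only
        split_ifs <;> simp
      · intro j hj a sI
        dsimp only
        by_cases h : Z j sI = a
        · rw [if_pos h, mul_one, ← Finset.sum_filter, Finset.sum_const, nsmul_eq_mul, mul_one]
          refine Nat.cast_le.mpr (le_min (Finset.card_le_card (Finset.filter_subset _ _)) ?_)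
          convert card_bound S C D hCDunion I hI Z j a sI _ ?_ using 1
          intro s hs
          rw [Finset.mem_filter, Finset.mem_filter] at hs
          exact ⟨hs.1.2, hs.2⟩
        · rw [if_neg h, mul_zero]
          refine (Finset.sum_eq_zero fun s hs => ?_).le
          rw [Finset.mem_filter] at hs
          rw [if_neg]
          intro hall
          apply h
          rw [← hs.2.1, ← hs.2.2]
          exact hall j hj
  · have hZne : Nonempty (∀ j : Fin n, (∀ i : (I j), S i.1) → S j) := inferInstance
    obtain ⟨Z, hZ⟩ := Finite.exists_max
      (fun Z : (∀ j : Fin n, (∀ i : (I j), S i.1) → S j) =>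
        ∑ s ∈ Finset.univ.filter
          (fun s : ∀ j, S j => ∀ j ∈ D, Z j (restrict I s j) = s j), pathProb C I P s * U s)
    refine ⟨_, ⟨Z, rfl⟩, ?_⟩
    rintro v ⟨Z', rfl⟩
    exact hZ Z'
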